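/- arXiv:math/0303370 — 3 statements merged into one kernel-verified Lean document; each statement's English description precedes it below -/
import Mathlib

section
/- Exchange Lemma: Let A, B, C, Q, R, S be n×n complex matrices. Then the operator identity X_A Δ_B X_C = Δ_Q X_R Δ_S holds, i.e. A·(B∘(C·M)) = Q∘(R·(S∘M)) for every n×n complex matrix M, if and only if the operator identity X_A Δ_C X_B = Δ_R X_Q Δ_{Sᵀ} holds, i.e. A·(C∘(B·M)) = R∘(Q·(Sᵀ∘M)) for every n×n complex matrix M. -/
open Matrix

variable {m : Type*} [Fintype m] [DecidableEq m]

/-- The Schur (entrywise) inverse `A^(-)` of a matrix: `(A^(-))_{ij} = (A_{ij})⁻¹`. -/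
noncomputable def sinv (A : Matrix m m ℂ) : Matrix m m ℂ := Matrix.of fun i j => (A i j)⁻¹

/-- A type-II matrix: a Schur invertible matrix `W` with `W * (W^(-))ᵀ = n • I`,
where `n` is the size of the matrix. -/
def IsTypeII (A : Matrix m m ℂ) : Prop :=
  (∀ i j, A i j ≠ 0) ∧ A * (sinv A)ᵀ = (Fintype.card m : ℂ) • (1 : Matrix m m ℂ)

/-- `v_{ij} = (A e_i) ∘ (B e_j)`: the entrywise product of column `i` of `A`
with column `j` of `B`. -/
def colProd (A B : Matrix m m ℂ) (i j : m) : m → ℂ := fun k => A k i * B k j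

/-- Membership in the Nomura algebra `N_{A,B}`: every `v_{ij}` is an eigenvector of `M`. -/
def InNomura (A B M : Matrix m m ℂ) : Prop :=
  ∀ i j, ∃ c : ℂ, M.mulVec (colProd A B i j) = c • colProd A B i j

/-- `S = Θ_{A,B}(M)`: the matrix of eigenvalues, i.e. `M v_{ij} = S_{ij} v_{ij}` for all `i,j`. -/
def IsTheta (A B M S : Matrix m m ℂ) : Prop :=
  ∀ i j, M.mulVec (colProd A B i j) = S i j • colProd A B i j

/-- `(A,B)` is a Jones pair: `A` invertible, `B` Schur invertible, and
`X_A Δ_B X_A = Δ_B X_A Δ_B` and `X_A Δ_{Bᵀ} X_A = Δ_{Bᵀ} X_A Δ_{Bᵀ}`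
as operators on matrices. -/
def IsJonesPair (A B : Matrix m m ℂ) : Prop :=
  IsUnit A ∧ (∀ i j, B i j ≠ 0) ∧
  (∀ M : Matrix m m ℂ, A * (B ⊙ (A * M)) = B ⊙ (A * (B ⊙ M))) ∧
  (∀ M : Matrix m m ℂ, A * (Bᵀ ⊙ (A * M)) = Bᵀ ⊙ (A * (Bᵀ ⊙ M)))

/-- An invertible Jones pair: a Jones pair in which moreover `A` is Schur
invertible and `B` is invertible. -/
def IsInvertibleJonesPair (A B : Matrix m m ℂ) : Prop :=
  IsJonesPair A B ∧ (∀ i j, A i j ≠ 0) ∧ IsUnit B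

/-- `W` is a spin model: for some `d` with `d² = n`, `(d⁻¹ W, W^(-))` is an
invertible Jones pair. -/
def IsSpinModel (W : Matrix m m ℂ) : Prop :=
  ∃ d : ℂ, d ^ 2 = (Fintype.card m : ℂ) ∧ IsInvertibleJonesPair (d⁻¹ • W) (sinv W)

/-- Given an invertible Jones pair `(A,B)` with `A` symmetric, `K` is paired with
`H ∈ N_{A,B}` if `Kᵀ ∈ N_{A,Bᵀ}` and `Θ_{A,B}(H) = (Θ_{A,Bᵀ}(Kᵀ))ᵀ`. -/
def Paired (A B H K : Matrix m m ℂ) : Prop :=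
  ∃ S : Matrix m m ℂ, IsTheta A B H S ∧ IsTheta A Bᵀ Kᵀ Sᵀ

/-- The `4n × 4n` matrix with `4 × 4` block structure
`[[P, Q, R, R], [Q, P, R, R], [S, S, T, U], [S, S, U, T]]`. -/
def blockMat {n : ℕ} (P Q R S T U : Matrix (Fin n) (Fin n) ℂ) :
    Matrix (Fin 4 × Fin n) (Fin 4 × Fin n) ℂ :=
  Matrix.of fun x y =>
    (![![P, Q, R, R], ![Q, P, R, R], ![S, S, T, U], ![S, S, U, T]] x.1 y.1) x.2 y.2

/-- Yamada's `4n × 4n` matrix `V` built from `A`, `B` and `d` with `d² = n`. -/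
noncomputable def Vmat {n : ℕ} (A B : Matrix (Fin n) (Fin n) ℂ) (d : ℂ) :
    Matrix (Fin 4 × Fin n) (Fin 4 × Fin n) ℂ :=
  blockMat (d • A) (-(d • A)) (sinv B) (sinv B)ᵀ (d • A) (-(d • A))

/-!
For fixed `i` and `j`, the `(i, j)` entry of either side of `X_A Δ_B X_C = Δ_Q X_R Δ_S` at `M` is a
linear form in the column `j` of `M`. Comparing coefficients turns the operator identity into the
scalar equations `∑ x, A i x * B x j * C x k = Q i j * R i k * S k j`, and the exchange
`B ↔ C`, `Q ↔ R`, `S ↔ Sᵀ` merely swaps `j` and `k` in them.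
-/

section ExchangeLemma

variable {l n o p α : Type*} [Fintype o]

theorem mul_hadamard_mul_apply [Fintype n] [NonUnitalSemiring α] (A : Matrix l n α)
    (B : Matrix n p α) (C : Matrix n o α) (M : Matrix o p α) (i : l) (j : p) :
    (A * (B ⊙ (C * M))) i j = (fun k => ∑ x, A i x * B x j * C x k) ⬝ᵥ M.col j := by
  simp only [mul_apply, hadamard_apply, dotProduct, col_apply, Finset.mul_sum, Finset.sum_mul,
    mul_assoc]
  exact Finset.sum_comm

theorem hadamard_mul_hadamard_apply [NonUnitalSemiring α] (Q : Matrix l p α) (R : Matrix l o α)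
    (S M : Matrix o p α) (i : l) (j : p) :
    (Q ⊙ (R * (S ⊙ M))) i j = (fun k => Q i j * R i k * S k j) ⬝ᵥ M.col j := by
  simp only [mul_apply, hadamard_apply, dotProduct, col_apply, Finset.mul_sum, mul_assoc]

theorem forall_mul_hadamard_mul_eq_iff [Fintype n] [Semiring α] (A : Matrix l n α)
    (B : Matrix n p α) (C : Matrix n o α) (Q : Matrix l p α) (R : Matrix l o α)
    (S : Matrix o p α) :
    (∀ M : Matrix o p α, A * (B ⊙ (C * M)) = Q ⊙ (R * (S ⊙ M))) ↔
      ∀ i j k, ∑ x, A i x * B x j * C x k = Q i j * R i k * S k j := by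
  simp only [← Matrix.ext_iff, mul_hadamard_mul_apply, hadamard_mul_hadamard_apply]
  constructor
  · intro h i j k
    have coeff_eq := dotProduct_eq _ _ fun v => h (of fun x _ => v x) i j
    exact congrFun coeff_eq k
  · intro h M i j
    simp only [h]

theorem exchange_lemma_general [Fintype n] [Fintype p] [CommSemiring α] (A : Matrix l n α)
    (B : Matrix n p α) (C : Matrix n o α) (Q : Matrix l p α) (R : Matrix l o α)
    (S : Matrix o p α) :
    (∀ M : Matrix o p α, A * (B ⊙ (C * M)) = Q ⊙ (R * (S ⊙ M))) ↔
      ∀ M : Matrix p o α, A * (C ⊙ (B * M)) = R ⊙ (Q * (Sᵀ ⊙ M)) := by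
  rw [forall_mul_hadamard_mul_eq_iff, forall_mul_hadamard_mul_eq_iff]
  refine forall_congr' fun i => forall_comm.trans ?_
  simp only [transpose_apply, mul_right_comm (A i _), mul_comm (R i _)]

end ExchangeLemma

/-- Exchange Lemma. -/
theorem exchange_lemma {n : ℕ} (hn : 0 < n) (A B C Q R S : Matrix (Fin n) (Fin n) ℂ) :
    (∀ M : Matrix (Fin n) (Fin n) ℂ, A * (B ⊙ (C * M)) = Q ⊙ (R * (S ⊙ M))) ↔
    (∀ M : Matrix (Fin n) (Fin n) ℂ, A * (C ⊙ (B * M)) = R ⊙ (Q * (Sᵀ ⊙ M))) :=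
  exchange_lemma_general A B C Q R S
end

section
/- Let A and B be n×n type-II matrices, and let R, S be n×n complex matrices such that R·((Ae_i)∘(Be_j)) = S_{ij}·((Ae_i)∘(Be_j)) for all i,j. Then Rᵀ·((A^(-)e_i)∘(B^(-)e_j)) = S_{ij}·((A^(-)e_i)∘(B^(-)e_j)) for all i,j; that is, R ∈ N_{A,B} implies Rᵀ ∈ N_{A^(-),B^(-)} and Θ_{A^(-),B^(-)}(Rᵀ) = Θ_{A,B}(R). -/
open Matrix

variable {m : Type*} [Fintype m] [DecidableEq m]

/-!
Fix `j` and let `X` be the matrix whose columns are the vectors `v_{ij}`, so that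
`X = diag(B e_j) * A`. The hypothesis on `R` says that `R * X = X * D` with `D = diag(S e_j)`.
Since `A` is type-II, the matrix `Y` formed in the same way from `A^(-)` and `B^(-)` satisfies
`X * Yᵀ = n • 1`, so `Yᵀ` is up to a scalar the inverse of `X` and intertwines in the opposite
direction: `Yᵀ * R = D * Yᵀ`. Transposing, the columns of `Y` are eigenvectors of `Rᵀ`.
-/

theorem semiconjBy_of_isUnit_mul {G : Type*} [Monoid G] [IsDedekindFiniteMonoid G] {x y d r : G}
    (hxy : IsUnit (x * y)) (hcomm : Commute (x * y) r) (h : SemiconjBy x d r) :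
    SemiconjBy y r d := by
  have hx : IsUnit x := isUnit_of_mul_isUnit_left hxy
  refine hx.mul_left_cancel ?_
  calc
    x * (y * r) = r * (x * y) := by rw [← mul_assoc, hcomm.eq]
    _ = r * x * y := (mul_assoc r x y).symm
    _ = x * (d * y) := by rw [← h.eq, mul_assoc]

theorem semiconjBy_diagonal_iff {ι R : Type*} [Fintype ι] [DecidableEq ι] [CommSemiring R]
    {X M : Matrix ι ι R} {d : ι → R} :
    SemiconjBy X (diagonal d) M ↔ ∀ i, M *ᵥ X.col i = d i • X.col i := by
  have hcol : ∀ i k, (X * diagonal d) k i = (d i • X.col i) k := fun i k => by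
    rw [mul_diagonal, Pi.smul_apply, smul_eq_mul, col_apply, mul_comm]
  refine ⟨fun h i => funext fun k => ?_, fun h => Matrix.ext fun k i => ?_⟩
  · rw [← hcol, h.eq]
    rfl
  · rw [hcol, ← h]
    rfl

/-- The matrix with columns `v_{1j}, …, v_{nj}`, which collects the candidate eigenvectors
sharing the second index `j`. -/
def colProdMatrix (A B : Matrix m m ℂ) (j : m) : Matrix m m ℂ :=
  Matrix.of fun k i => colProd A B i j k

theorem colProdMatrix_eq_diagonal_mul (A B : Matrix m m ℂ) (j : m) :
    colProdMatrix A B j = diagonal (B.col j) * A := by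
  ext k i
  rw [diagonal_mul, mul_comm]
  rfl

theorem isTheta_iff_semiconjBy {A B M S : Matrix m m ℂ} :
    IsTheta A B M S ↔ ∀ j, SemiconjBy (colProdMatrix A B j) (diagonal (S.col j)) M := by
  simp only [semiconjBy_diagonal_iff]
  exact forall_comm

theorem isTheta_transpose_iff_semiconjBy {A B M S : Matrix m m ℂ} :
    IsTheta A B Mᵀ S ↔ ∀ j, SemiconjBy (colProdMatrix A B j)ᵀ M (diagonal (S.col j)) := by
  rw [isTheta_iff_semiconjBy]
  refine forall_congr' fun j => ?_
  rw [SemiconjBy, SemiconjBy, ← transpose_inj, transpose_mul, transpose_mul, transpose_transpose,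
    diagonal_transpose, eq_comm]

theorem diagonal_col_mul_diagonal_col_sinv {B : Matrix m m ℂ} {j : m} (hB : ∀ k, B k j ≠ 0) :
    diagonal (B.col j) * diagonal ((sinv B).col j) = 1 := by
  rw [diagonal_mul_diagonal, ← diagonal_one]
  exact congrArg diagonal (funext fun k => mul_inv_cancel₀ (hB k))

theorem colProdMatrix_mul_transpose_sinv {A B : Matrix m m ℂ} {j : m} (hA : IsTypeII A)
    (hB : ∀ k, B k j ≠ 0) :
    colProdMatrix A B j * (colProdMatrix (sinv A) (sinv B) j)ᵀ = (Fintype.card m : ℂ) • 1 := by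
  simp only [colProdMatrix_eq_diagonal_mul, transpose_mul, diagonal_transpose]
  calc
    diagonal (B.col j) * A * ((sinv A)ᵀ * diagonal ((sinv B).col j))
        = diagonal (B.col j) * (A * (sinv A)ᵀ) * diagonal ((sinv B).col j) := by
      simp only [Matrix.mul_assoc]
    _ = (Fintype.card m : ℂ) • (diagonal (B.col j) * diagonal ((sinv B).col j)) := by
      rw [hA.2, mul_smul_comm, mul_one, smul_mul_assoc]
    _ = (Fintype.card m : ℂ) • 1 := by rw [diagonal_col_mul_diagonal_col_sinv hB]

theorem theta_sinv_general {A B R S : Matrix m m ℂ} (hA : IsTypeII A) (hB : ∀ i j, B i j ≠ 0)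
    (h : IsTheta A B R S) : IsTheta (sinv A) (sinv B) Rᵀ S := by
  refine isTheta_transpose_iff_semiconjBy.mpr fun j => ?_
  have : Nonempty m := ⟨j⟩
  have hcard : (Fintype.card m : ℂ) ≠ 0 := Nat.cast_ne_zero.mpr Fintype.card_ne_zero
  have hXY := colProdMatrix_mul_transpose_sinv hA fun k => hB k j
  have hunit : IsUnit ((Fintype.card m : ℂ) • (1 : Matrix m m ℂ)) :=
    isUnit_one.smul (Units.mk0 _ hcard)
  have hcomm : Commute ((Fintype.card m : ℂ) • (1 : Matrix m m ℂ)) R :=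
    (Commute.one_left R).smul_left _
  rw [← hXY] at hunit hcomm
  exact semiconjBy_of_isUnit_mul hunit hcomm (isTheta_iff_semiconjBy.mp h j)

theorem theta_sinv {n : ℕ} (hn : 0 < n) (A B R S : Matrix (Fin n) (Fin n) ℂ)
    (hA : IsTypeII A) (hB : IsTypeII B) (h : IsTheta A B R S) :
    IsTheta (sinv A) (sinv B) Rᵀ S :=
  theta_sinv_general hA hB.1 h
end

section
/- Let A be an n×n type-II matrix. If R ∈ N_A with S = Θ_A(R), then S ∈ N_{Aᵀ} and Θ_{Aᵀ}(S) = nRᵀ, i.e. Θ_{Aᵀ}(Θ_A(R)) = nRᵀ. Consequently the image of Θ_A equals N_{Aᵀ} and the image of Θ_{Aᵀ} equals N_A (so the dual algebras satisfy N_A' = N_{Aᵀ} and N_{Aᵀ}' = N_A). -/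
open Matrix

variable {m : Type*} [Fintype m] [DecidableEq m]

/-! For a type-II matrix `A` of size `n`, let `D i` be the diagonal matrix of column `i` of `A`.
The eigenvector equations of `Θ_A(R) = S` with first index `i` say that
`R * D i * A^(-) = D i * A^(-) * diag(S i)`. Since `A^(-) * Aᵀ = n • 1`, multiplying on the right
by `Aᵀ` turns this into `D i * A^(-) * diag(S i) * Aᵀ = n • (R * D i)`. Its entry `(q, p)` is, up to
the nonzero factor `A q i`, the `i`-th coordinate of the eigenvector equation of
`Θ_{Aᵀ}(S) = n • Rᵀ` with indices `p, q`. -/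

theorem mul_eq_smul_one_comm {ι K : Type*} [Fintype ι] [DecidableEq ι] [Field K] {c : K}
    (hc : c ≠ 0) {P Q : Matrix ι ι K} : P * Q = c • 1 ↔ Q * P = c • 1 := by
  rw [← inv_smul_eq_iff₀ hc, ← inv_smul_eq_iff₀ hc, ← Matrix.mul_smul, ← Matrix.smul_mul,
    mul_eq_one_comm]

theorem mul_eq_iff_mul_eq_smul {ι K : Type*} [Fintype ι] [DecidableEq ι] [Field K] {c : K}
    (hc : c ≠ 0) {P Q X Y : Matrix ι ι K} (hPQ : P * Q = c • 1) :
    X * P = Y ↔ Y * Q = c • X := by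
  constructor
  · rintro rfl
    rw [Matrix.mul_assoc, hPQ, Matrix.mul_smul, Matrix.mul_one]
  · intro h
    have hQP : Q * P = c • 1 := (mul_eq_smul_one_comm hc).mp hPQ
    apply smul_right_injective _ hc
    calc c • (X * P) = Y * (Q * P) := by rw [← Matrix.smul_mul, ← h, Matrix.mul_assoc]
      _ = c • Y := by rw [hQP, Matrix.mul_smul, Matrix.mul_one]

theorem IsTheta.inNomura {ι : Type*} [Fintype ι] {A B M S : Matrix ι ι ℂ}
    (h : IsTheta A B M S) : InNomura A B M :=
  fun i j => ⟨S i j, h i j⟩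

theorem inNomura_iff_exists_isTheta {ι : Type*} [Fintype ι] {A B M : Matrix ι ι ℂ} :
    InNomura A B M ↔ ∃ S, IsTheta A B M S := by
  refine ⟨fun h => ?_, fun ⟨S, hS⟩ => hS.inNomura⟩
  choose S hS using h
  exact ⟨S, hS⟩

theorem isTheta_iff_mul_eq_mul_diagonal {A B M S : Matrix m m ℂ} :
    IsTheta A B M S ↔
      ∀ i, M * diagonal (A.col i) * B = diagonal (A.col i) * B * diagonal (S i) := by
  refine forall_congr' fun i => ?_
  rw [← Matrix.ext_iff, forall_comm]
  refine forall_congr' fun j => funext_iff.trans <| forall_congr' fun l => Eq.congr ?_ ?_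
  · rw [Matrix.mul_apply]
    simp only [mulVec, dotProduct, colProd, mul_diagonal, col_apply, mul_assoc]
  · simp only [Pi.smul_apply, smul_eq_mul, colProd, mul_diagonal, diagonal_mul, col_apply]
    ring

theorem isTheta_transpose_iff_mul_eq_mul_diagonal {A S T : Matrix m m ℂ}
    (hA : ∀ i j, A i j ≠ 0) :
    IsTheta Aᵀ (sinv Aᵀ) S T ↔
      ∀ i, diagonal (A.col i) * sinv A * diagonal (S i) * Aᵀ = Tᵀ * diagonal (A.col i) := by
  have entry_left (p q i : m) :
      (diagonal (A.col i) * sinv A * diagonal (S i) * Aᵀ) q p =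
        A q i * (S *ᵥ colProd Aᵀ (sinv Aᵀ) p q) i := by
    rw [Matrix.mul_apply, mulVec, dotProduct, Finset.mul_sum]
    refine Finset.sum_congr rfl fun j _ => ?_
    simp only [mul_diagonal, diagonal_mul, colProd, sinv, of_apply, transpose_apply, col_apply]
    ring
  have entry_right (p q i : m) :
      (Tᵀ * diagonal (A.col i)) q p = A q i * (T p q • colProd Aᵀ (sinv Aᵀ) p q) i := by
    simp only [mul_diagonal, colProd, sinv, of_apply, transpose_apply, col_apply,
      Pi.smul_apply, smul_eq_mul]
    field [hA q i]
  simp only [IsTheta, funext_iff, ← Matrix.ext_iff, entry_left, entry_right,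
    mul_right_inj' (hA _ _)]
  exact ⟨fun h i q p => h p q i, fun h p q i => h i q p⟩

namespace IsTypeII

variable {A : Matrix m m ℂ}

theorem sinv_mul_transpose (hA : IsTypeII A) :
    sinv A * Aᵀ = (Fintype.card m : ℂ) • (1 : Matrix m m ℂ) := by
  simpa only [transpose_mul, transpose_transpose, transpose_smul, transpose_one] using
    congrArg transpose hA.2

variable [Nonempty m]

theorem transpose (hA : IsTypeII A) : IsTypeII Aᵀ :=
  ⟨fun i j => hA.1 j i,
    (mul_eq_smul_one_comm (Nat.cast_ne_zero.mpr Fintype.card_ne_zero)).mp hA.sinv_mul_transpose⟩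

theorem isTheta_iff_isTheta_transpose (hA : IsTypeII A) {R S : Matrix m m ℂ} :
    IsTheta A (sinv A) R S ↔ IsTheta Aᵀ (sinv Aᵀ) S ((Fintype.card m : ℂ) • Rᵀ) := by
  rw [isTheta_iff_mul_eq_mul_diagonal, isTheta_transpose_iff_mul_eq_mul_diagonal hA.1]
  refine forall_congr' fun i => ?_
  rw [transpose_smul, transpose_transpose, Matrix.smul_mul]
  exact mul_eq_iff_mul_eq_smul (Nat.cast_ne_zero.mpr Fintype.card_ne_zero) hA.sinv_mul_transpose

theorem exists_isTheta_iff_inNomura_transpose (hA : IsTypeII A) {S : Matrix m m ℂ} :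
    (∃ R, IsTheta A (sinv A) R S) ↔ InNomura Aᵀ (sinv Aᵀ) S := by
  refine ⟨fun ⟨R, hR⟩ => (hA.isTheta_iff_isTheta_transpose.mp hR).inNomura, fun hS => ?_⟩
  obtain ⟨T, hT⟩ := inNomura_iff_exists_isTheta.mp hS
  refine ⟨(Fintype.card m : ℂ)⁻¹ • Tᵀ, hA.isTheta_iff_isTheta_transpose.mpr ?_⟩
  rwa [transpose_smul, transpose_transpose,
    smul_inv_smul₀ (Nat.cast_ne_zero.mpr Fintype.card_ne_zero)]

end IsTypeII

theorem duality_typeII_general [Nonempty m] {A : Matrix m m ℂ} (hA : IsTypeII A) :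
    (∀ R S : Matrix m m ℂ, IsTheta A (sinv A) R S →
      InNomura Aᵀ (sinv Aᵀ) S ∧ IsTheta Aᵀ (sinv Aᵀ) S ((Fintype.card m : ℂ) • Rᵀ)) ∧
    {S : Matrix m m ℂ | ∃ R, IsTheta A (sinv A) R S} =
      {S : Matrix m m ℂ | InNomura Aᵀ (sinv Aᵀ) S} ∧
    {S : Matrix m m ℂ | ∃ R, IsTheta Aᵀ (sinv Aᵀ) R S} =
      {S : Matrix m m ℂ | InNomura A (sinv A) S} := by
  refine ⟨fun R S hRS => ?_, Set.ext fun S => hA.exists_isTheta_iff_inNomura_transpose,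
    Set.ext fun S => hA.transpose.exists_isTheta_iff_inNomura_transpose⟩
  have hSR := hA.isTheta_iff_isTheta_transpose.mp hRS
  exact ⟨hSR.inNomura, hSR⟩

theorem duality_typeII {n : ℕ} (hn : 0 < n) (A : Matrix (Fin n) (Fin n) ℂ)
    (hA : IsTypeII A) :
    (∀ R S : Matrix (Fin n) (Fin n) ℂ, IsTheta A (sinv A) R S →
      InNomura Aᵀ (sinv Aᵀ) S ∧ IsTheta Aᵀ (sinv Aᵀ) S ((n : ℂ) • Rᵀ)) ∧
    {S : Matrix (Fin n) (Fin n) ℂ | ∃ R, IsTheta A (sinv A) R S} =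
      {S : Matrix (Fin n) (Fin n) ℂ | InNomura Aᵀ (sinv Aᵀ) S} ∧
    {S : Matrix (Fin n) (Fin n) ℂ | ∃ R, IsTheta Aᵀ (sinv Aᵀ) R S} =
      {S : Matrix (Fin n) (Fin n) ℂ | InNomura A (sinv A) S} := by
  have : Nonempty (Fin n) := ⟨⟨0, hn⟩⟩
  simpa only [Fintype.card_fin] using duality_typeII_general hA
end
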